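/- In the mean field kernel setting: for every f ∈ H_k there exists a sequence f_M ∈ H_{k_M} (M ∈ ℕ₊) such that sup_{x ∈ X^M}|f_M(x) − f(μ̂[x])| → 0 and limsup_{M→∞} ‖f_M‖_{k_M} ≤ ‖f‖_k. -/

import Mathlib

open MeasureTheory Filter
open scoped ENNReal RealInnerProductSpace

/-- Kantorovich–Rubinstein metric: `d_KR(μ,ν) = sup{∫φ dμ − ∫φ dν : φ 1-Lipschitz}`. -/
noncomputable def dKR {X : Type*} [MeasurableSpace X] [MetricSpace X] (μ ν : Measure X) : ℝ :=
  ⨆ φ : {f : X → ℝ // LipschitzWith 1 f}, (∫ x, φ.1 x ∂μ - ∫ x, φ.1 x ∂ν)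

/-- The empirical measure `(1/M) ∑ᵢ δ_{xᵢ}` of a tuple `x ∈ X^M`. -/
noncomputable def empMeasure {X : Type*} [MeasurableSpace X] {M : ℕ} (x : Fin M → X) : Measure X :=
  ((M : ℝ≥0∞)⁻¹) • ∑ i, Measure.dirac (x i)

theorem empMeasure_prob {X : Type*} [MeasurableSpace X] {M : ℕ} (x : Fin (M + 1) → X) :
    IsProbabilityMeasure (empMeasure x) := by
  constructor
  simp only [empMeasure, Measure.smul_apply, smul_eq_mul]
  rw [Measure.coe_finset_sum]
  simp only [Finset.sum_apply, measure_univ, Finset.sum_const, Finset.card_univ,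
    Fintype.card_fin, nsmul_eq_mul, mul_one]
  exact ENNReal.inv_mul_cancel (by exact_mod_cast Nat.succ_ne_zero M) (by simp)

/-- The empirical measure of a (nonempty) tuple, as a probability measure. -/
noncomputable def empProb {X : Type*} [MeasurableSpace X] {M : ℕ} (x : Fin (M + 1) → X) :
    ProbabilityMeasure X :=
  ⟨empMeasure x, empMeasure_prob x⟩

open scoped Topology

/-!
Empirical measures of `M`-tuples exhaust `P(X)` in the Kantorovich–Rubinstein metric: quantize `μ`
on a finite net, then round the weights to multiples of `1 / M`. As `k` is Lipschitz in that metric,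
every feature `Φ μ` is a limit of features `Φ (μ̂[ξ_M])`.

Hence `g = ∑ cᵢ Φ(μᵢ)` is the limit of `∑ cᵢ Φ(μ̂[ξᵢ_M])`, and the same combination
`f_M = ∑ cᵢ Φ_M(ξᵢ_M)` of features of `k_M` has asymptotically the same inner products, because the
Gram kernels `k_M` and `k` are uniformly close. This yields both the uniform convergence and
`‖f_M‖ → ‖g‖`. Such `g` are dense, and a diagonal argument passes to the closure.
-/

section UniformConvergence

/-- Convergence to zero as `n → ∞`, uniformly in a variable `x : Ω n` whose domain depends on `n`.
It expresses `sup_{x ∈ X^M} |F_M(x)| → 0` without assuming that the suprema are finite. -/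
def UniformlyNull {Ω : ℕ → Type*} (F : ∀ n, Ω n → ℝ) : Prop :=
  ∀ ε > 0, ∀ᶠ n in atTop, ∀ x, |F n x| ≤ ε

theorem uniformlyNull_iff_tendsto {Ω : ℕ → Type*} {F : ∀ n, Ω n → ℝ} :
    UniformlyNull F ↔
      Tendsto (fun p : Σ n, Ω n => F p.1 p.2) (comap Sigma.fst atTop) (𝓝 0) := by
  simp only [UniformlyNull, Metric.nhds_basis_closedBall.tendsto_right_iff, eventually_comap,
    Metric.mem_closedBall, dist_zero_right, Real.norm_eq_abs, Sigma.forall]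
  refine forall₂_congr fun ε _ => eventually_congr (.of_forall fun n => ?_)
  exact ⟨by rintro h _ x rfl; exact h x, fun h x => h n x rfl⟩

theorem UniformlyNull.add {Ω : ℕ → Type*} {F G : ∀ n, Ω n → ℝ} (hF : UniformlyNull F)
    (hG : UniformlyNull G) : UniformlyNull fun n x => F n x + G n x := by
  rw [uniformlyNull_iff_tendsto] at hF hG ⊢
  simpa only [add_zero] using hF.add hG

theorem UniformlyNull.sum_const_mul {Ω : ℕ → Type*} {ι : Type*} {s : Finset ι} {c : ι → ℝ}
    {F : ι → ∀ n, Ω n → ℝ} (hF : ∀ i ∈ s, UniformlyNull (F i)) :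
    UniformlyNull fun n x => ∑ i ∈ s, c i * F i n x := by
  simp only [uniformlyNull_iff_tendsto] at hF ⊢
  simpa only [mul_zero, Finset.sum_const_zero] using
    tendsto_finsetSum s fun i hi => (hF i hi).const_mul (c i)

theorem UniformlyNull.comp {Ω Ω' : ℕ → Type*} {F : ∀ n, Ω n → ℝ} (hF : UniformlyNull F)
    (u : ∀ n, Ω' n → Ω n) : UniformlyNull fun n x => F n (u n x) :=
  fun ε hε => (hF ε hε).mono fun n h x => h (u n x)

theorem UniformlyNull.tendsto_apply {Ω : ℕ → Type*} {F : ∀ n, Ω n → ℝ} (hF : UniformlyNull F)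
    (x : ∀ n, Ω n) : Tendsto (fun n => F n (x n)) atTop (𝓝 0) :=
  Metric.nhds_basis_closedBall.tendsto_right_iff.2 fun ε hε =>
    (hF ε hε).mono fun n h => by simpa using h (x n)

theorem exists_seq_forall_eventually {α : ℕ → Type*} [∀ n, Nonempty (α n)]
    {p : ∀ n, ℝ → α n → Prop} (hp : ∀ n a, Monotone (p n · a))
    (h : ∀ ε > 0, ∀ᶠ n in atTop, ∃ a, p n ε a) :
    ∃ a : ∀ n, α n, ∀ ε > 0, ∀ᶠ n in atTop, p n ε (a n) := by
  classical
  -- `a n` realizes the smallest tolerance `1 / (m + 1)`, `m ≤ n`, that is available at `n`.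
  let m : ℕ → ℕ := fun n => Nat.findGreatest (fun m => ∃ a, p n (1 / ((m : ℝ) + 1)) a) n
  refine ⟨fun n => Classical.epsilon (p n (1 / ((m n : ℝ) + 1))), fun ε hε => ?_⟩
  obtain ⟨j, hj⟩ := exists_nat_one_div_lt hε
  filter_upwards [h _ Nat.one_div_pos_of_nat, eventually_ge_atTop j] with n hn hjn
  have hjm : j ≤ m n := Nat.le_findGreatest hjn hn
  have hm : ∃ a, p n (1 / ((m n : ℝ) + 1)) a :=
    Nat.findGreatest_spec (P := fun m => ∃ a, p n (1 / ((m : ℝ) + 1)) a) hjn hn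
  exact hp n _ ((Nat.one_div_le_one_div hjm).trans hj.le) (Classical.epsilon_spec hm)

end UniformConvergence

section RecoverySequence

variable {Ω : ℕ → Type*} {H : ℕ → Type*} [∀ n, NormedAddCommGroup (H n)]
  [∀ n, InnerProductSpace ℝ (H n)] {E : Type*} [NormedAddCommGroup E] [InnerProductSpace ℝ E]
  {φ : ∀ n, Ω n → H n} {ψ : ∀ n, Ω n → E}

/-- `f` is a recovery sequence for `g`: the functions on `Ω n` represented by `f n` through the
feature maps `φ n` and by `g` through `ψ n` become uniformly close, and the norms converge. -/
def IsRecoverySequence (φ : ∀ n, Ω n → H n) (ψ : ∀ n, Ω n → E) (f : ∀ n, H n) (g : E) : Prop :=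
  UniformlyNull (fun n x => ⟪f n, φ n x⟫ - ⟪g, ψ n x⟫) ∧
    Tendsto (fun n => ‖f n‖) atTop (𝓝 ‖g‖)

theorem norm_sq_sum_smul_eq_sum_mul_inner {ι F : Type*} [NormedAddCommGroup F]
    [InnerProductSpace ℝ F] (s : Finset ι) (c : ι → ℝ) (v : ι → F) :
    ‖∑ i ∈ s, c i • v i‖ ^ 2 = ∑ i ∈ s, c i * ⟪∑ j ∈ s, c j • v j, v i⟫ := by
  simp only [← real_inner_self_eq_norm_sq, inner_sum s _ (∑ j ∈ s, c j • v j),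
    real_inner_smul_right]

theorem abs_inner_sub_inner_le_of_norm_le (u g : E) {y : E} {C : ℝ} (hy : ‖y‖ ≤ C) :
    |⟪u, y⟫ - ⟪g, y⟫| ≤ ‖u - g‖ * C :=
  calc |⟪u, y⟫ - ⟪g, y⟫| = |⟪u - g, y⟫| := by rw [inner_sub_left]
    _ ≤ ‖u - g‖ * ‖y‖ := abs_real_inner_le_norm _ _
    _ ≤ ‖u - g‖ * C := by gcongr

theorem uniformlyNull_inner_sub_inner_of_tendsto {u : ℕ → E} {g : E} {C : ℝ}
    (hψ : ∀ n x, ‖ψ n x‖ ≤ C) (hu : Tendsto u atTop (𝓝 g)) :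
    UniformlyNull fun n x => ⟪u n, ψ n x⟫ - ⟪g, ψ n x⟫ := by
  have hdist : Tendsto (fun n => ‖u n - g‖ * C) atTop (𝓝 0) := by
    simpa only [zero_mul] using (tendsto_iff_norm_sub_tendsto_zero.1 hu).mul_const C
  intro ε hε
  filter_upwards [hdist.eventually_le_const hε] with n hn x
  exact (abs_inner_sub_inner_le_of_norm_le _ _ (hψ n x)).trans hn

section FiniteCombination

variable {ι : Type*} (s : Finset ι) (c : ι → ℝ) (ξ : ι → ∀ n, Ω n)

theorem uniformlyNull_inner_sum_smul_sub
    (hφψ : UniformlyNull fun n (x : Ω n × Ω n) => ⟪φ n x.1, φ n x.2⟫ - ⟪ψ n x.1, ψ n x.2⟫) :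
    UniformlyNull fun n x =>
      ⟪∑ i ∈ s, c i • φ n (ξ i n), φ n x⟫ - ⟪∑ i ∈ s, c i • ψ n (ξ i n), ψ n x⟫ := by
  simp only [sum_inner, real_inner_smul_left, ← Finset.sum_sub_distrib, ← mul_sub]
  exact .sum_const_mul fun i _ => hφψ.comp fun n x => (ξ i n, x)

theorem tendsto_norm_sq_sum_smul_sub
    (hφψ : UniformlyNull fun n (x : Ω n × Ω n) => ⟪φ n x.1, φ n x.2⟫ - ⟪ψ n x.1, ψ n x.2⟫) :
    Tendsto (fun n => ‖∑ i ∈ s, c i • φ n (ξ i n)‖ ^ 2 - ‖∑ i ∈ s, c i • ψ n (ξ i n)‖ ^ 2)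
      atTop (𝓝 0) := by
  simp only [norm_sq_sum_smul_eq_sum_mul_inner, ← Finset.sum_sub_distrib, ← mul_sub]
  simpa only [mul_zero, Finset.sum_const_zero] using tendsto_finsetSum s fun i _ =>
    ((uniformlyNull_inner_sum_smul_sub s c ξ hφψ).tendsto_apply (ξ i)).const_mul (c i)

theorem isRecoverySequence_sum_smul {C : ℝ} {v : ι → E} (hψ : ∀ n x, ‖ψ n x‖ ≤ C)
    (hφψ : UniformlyNull fun n (x : Ω n × Ω n) => ⟪φ n x.1, φ n x.2⟫ - ⟪ψ n x.1, ψ n x.2⟫)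
    (hξ : ∀ i, Tendsto (fun n => ψ n (ξ i n)) atTop (𝓝 (v i))) :
    IsRecoverySequence φ ψ (fun n => ∑ i ∈ s, c i • φ n (ξ i n)) (∑ i ∈ s, c i • v i) := by
  have hlim : Tendsto (fun n => ∑ i ∈ s, c i • ψ n (ξ i n)) atTop (𝓝 (∑ i ∈ s, c i • v i)) :=
    tendsto_finsetSum s fun i _ => (hξ i).const_smul (c i)
  refine ⟨?_, ?_⟩
  · simpa only [sub_add_sub_cancel] using
      (uniformlyNull_inner_sum_smul_sub s c ξ hφψ).add
        (uniformlyNull_inner_sub_inner_of_tendsto hψ hlim)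
  · have hsq : Tendsto (fun n => ‖∑ i ∈ s, c i • φ n (ξ i n)‖ ^ 2) atTop
        (𝓝 (‖∑ i ∈ s, c i • v i‖ ^ 2)) := by
      simpa only [sub_add_cancel, zero_add] using
        (tendsto_norm_sq_sum_smul_sub s c ξ hφψ).add (hlim.norm.pow 2)
    simpa only [Real.sqrt_sq (norm_nonneg _)] using hsq.sqrt

end FiniteCombination

theorem exists_isRecoverySequence_of_mem_closure {C : ℝ} {g : E} (hψ : ∀ n x, ‖ψ n x‖ ≤ C)
    (hg : g ∈ closure {g' | ∃ f, IsRecoverySequence φ ψ f g'}) :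
    ∃ f, IsRecoverySequence φ ψ f g := by
  have happrox : ∀ ε > 0, ∀ᶠ n in atTop, ∃ a : H n,
      (∀ x, |⟪a, φ n x⟫ - ⟪g, ψ n x⟫| ≤ ε) ∧ |‖a‖ - ‖g‖| ≤ ε := by
    intro ε hε
    have hinner : ∀ᶠ g' in 𝓝 g, ‖g' - g‖ * C < ε / 2 :=
      ContinuousAt.eventually_lt (by fun_prop) continuousAt_const (by simpa using half_pos hε)
    have hnorm : ∀ᶠ g' in 𝓝 g, |‖g'‖ - ‖g‖| < ε / 2 :=
      ContinuousAt.eventually_lt (by fun_prop) continuousAt_const (by simpa using half_pos hε)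
    obtain ⟨g', ⟨f, hfunif, hfnorm⟩, hg'inner, hg'norm⟩ :=
      ((mem_closure_iff_frequently.1 hg).and_eventually (hinner.and hnorm)).exists
    filter_upwards [hfunif (ε / 2) (half_pos hε),
      hfnorm.eventually (Metric.closedBall_mem_nhds _ (half_pos hε))] with n hn hn'
    refine ⟨f n, fun x => ?_, ?_⟩
    · linarith [abs_sub_le ⟪f n, φ n x⟫ ⟪g', ψ n x⟫ ⟪g, ψ n x⟫, hn x,
        abs_inner_sub_inner_le_of_norm_le g' g (hψ n x)]
    · rw [Real.dist_eq] at hn'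
      linarith [abs_sub_le ‖f n‖ ‖g'‖ ‖g‖]
  obtain ⟨f, hf⟩ := exists_seq_forall_eventually (fun n a ε δ hεδ h =>
    ⟨fun x => (h.1 x).trans hεδ, h.2.trans hεδ⟩) happrox
  refine ⟨f, fun ε hε => (hf ε hε).mono fun n h => h.1, ?_⟩
  exact Metric.nhds_basis_closedBall.tendsto_right_iff.2 fun ε hε =>
    (hf ε hε).mono fun n h => h.2

end RecoverySequence

section Quantization

theorem abs_sum_mul_le_of_sum_eq_zero {ι : Type*} [Fintype ι] {a φ : ι → ℝ} {D : ℝ}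
    (ha : ∑ i, a i = 0) (hφ : ∀ i j, |φ i - φ j| ≤ D) :
    |∑ i, a i * φ i| ≤ (∑ i, |a i|) * D := by
  rcases isEmpty_or_nonempty ι with _ | ⟨⟨j⟩⟩
  · simp
  calc |∑ i, a i * φ i| = |∑ i, a i * (φ i - φ j)| := by
        simp only [mul_sub, Finset.sum_sub_distrib, ← Finset.sum_mul, ha, zero_mul, sub_zero]
    _ ≤ ∑ i, |a i * (φ i - φ j)| := Finset.abs_sum_le_sum_abs _ _
    _ ≤ ∑ i, |a i| * D := by
        gcongr with i
        rw [abs_mul]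
        gcongr
        exact hφ i j
    _ = (∑ i, |a i|) * D := (Finset.sum_mul ..).symm

theorem exists_nat_rounding_of_sum_eq {ι : Type*} [Fintype ι] [Nonempty ι] {w : ι → ℝ} {n : ℕ}
    (hw : ∀ i, 0 ≤ w i) (hsum : ∑ i, w i = n) :
    ∃ t : ι → ℕ, ∑ i, t i = n ∧ ∑ i, |(t i : ℝ) - w i| ≤ 2 * Fintype.card ι := by
  classical
  obtain ⟨j⟩ := ‹Nonempty ι›
  have hfloor : ∑ i, ⌊w i⌋₊ ≤ n := by
    have : ∑ i, (⌊w i⌋₊ : ℝ) ≤ n := hsum ▸ Finset.sum_le_sum fun i _ => Nat.floor_le (hw i)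
    exact_mod_cast this
  -- Round every weight down and give the whole deficit to the index `j`.
  let t : ι → ℕ := fun i => ⌊w i⌋₊ + if i = j then n - ∑ i, ⌊w i⌋₊ else 0
  have ht : ∑ i, t i = n := by
    simp only [t, Finset.sum_add_distrib, Finset.sum_ite_eq', Finset.mem_univ, if_true]
    omega
  -- Since `t i - w i > -1`, the absolute values cost only a constant, and the signed sum vanishes.
  have habs : ∀ i, |(t i : ℝ) - w i| ≤ ((t i : ℝ) - w i) + 2 := by
    intro i
    have hlt : w i < ⌊w i⌋₊ + 1 := Nat.lt_floor_add_one _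
    have hle : (⌊w i⌋₊ : ℝ) ≤ t i := by exact_mod_cast Nat.le_add_right _ _
    exact abs_le.2 ⟨by linarith, by linarith⟩
  refine ⟨t, ht, ?_⟩
  calc ∑ i, |(t i : ℝ) - w i| ≤ ∑ i, (((t i : ℝ) - w i) + 2) :=
        Finset.sum_le_sum fun i _ => habs i
    _ = (∑ i, t i : ℕ) - ∑ i, w i + 2 * Fintype.card ι := by
        simp [Finset.sum_add_distrib, mul_comm]
    _ = 2 * Fintype.card ι := by rw [ht, hsum, sub_self, zero_add]

theorem exists_fin_tuple_forall_sum_eq {ι : Type*} [Fintype ι] {n : ℕ} {t : ι → ℕ}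
    (ht : ∑ i, t i = n) :
    ∃ x : Fin n → ι, ∀ φ : ι → ℝ, ∑ m, φ (x m) = ∑ i, t i * φ i := by
  have hcard : Fintype.card (Fin n) = Fintype.card (Σ i, Fin (t i)) := by simp [ht]
  let e := Fintype.equivOfCardEq hcard
  refine ⟨fun m => (e m).1, fun φ => ?_⟩
  rw [e.sum_comp (fun q => φ q.1), Fintype.sum_sigma]
  simp

theorem exists_fin_tuple_forall_abs_sum_sub_average_le {ι : Type*} [Fintype ι] {p : ι → ℝ}
    (hp : ∀ i, 0 ≤ p i) (hsum : ∑ i, p i = 1) {n : ℕ} (hn : 0 < n) :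
    ∃ x : Fin n → ι, ∀ (φ : ι → ℝ) (D : ℝ), (∀ i j, |φ i - φ j| ≤ D) →
      |∑ i, p i * φ i - (n : ℝ)⁻¹ * ∑ m, φ (x m)| ≤ 2 * Fintype.card ι * D / n := by
  have hn' : (0 : ℝ) < n := by exact_mod_cast hn
  have : Nonempty ι := by
    by_contra! h
    simp at hsum
  obtain ⟨t, ht, htp⟩ := exists_nat_rounding_of_sum_eq (w := fun i => n * p i) (n := n)
    (fun i => mul_nonneg hn'.le (hp i)) (by rw [← Finset.mul_sum, hsum, mul_one])
  obtain ⟨x, hx⟩ := exists_fin_tuple_forall_sum_eq ht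
  refine ⟨x, fun φ D hφ => ?_⟩
  have hD : 0 ≤ D := (abs_nonneg _).trans (hφ (Classical.arbitrary ι) (Classical.arbitrary ι))
  have hzero : ∑ i, ((t i : ℝ) - n * p i) = 0 := by
    rw [Finset.sum_sub_distrib, ← Finset.mul_sum, hsum, ← Nat.cast_sum, ht, mul_one, sub_self]
  have hscale : (∑ i, p i * φ i - (n : ℝ)⁻¹ * ∑ m, φ (x m)) * n =
      -∑ i, ((t i : ℝ) - n * p i) * φ i := by
    simp only [hx, sub_mul, Finset.sum_sub_distrib, mul_assoc, ← Finset.mul_sum]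
    field_simp
    ring
  rw [le_div_iff₀ hn', ← abs_of_pos hn', ← abs_mul, abs_of_pos hn', hscale, abs_neg]
  calc _ ≤ (∑ i, |(t i : ℝ) - n * p i|) * D := abs_sum_mul_le_of_sum_eq_zero hzero hφ
    _ ≤ 2 * Fintype.card ι * D := by gcongr

theorem exists_simpleFunc_dist_le {X : Type*} [PseudoMetricSpace X] [CompactSpace X] [Nonempty X]
    [MeasurableSpace X] [OpensMeasurableSpace X] {ε : ℝ} (hε : 0 < ε) :
    ∃ s : SimpleFunc X X, ∀ x, dist (s x) x ≤ ε := by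
  let e := TopologicalSpace.denseSeq X
  have hcover : Set.univ ⊆ ⋃ i, Metric.ball (e i) ε := fun x _ =>
    Set.mem_iUnion.2 ((TopologicalSpace.denseRange_denseSeq X).exists_dist_lt x hε)
  obtain ⟨t, ht⟩ := isCompact_univ.elim_finite_subcover _ (fun i => Metric.isOpen_ball) hcover
  refine ⟨SimpleFunc.nearestPt e (t.sup id), fun x => ?_⟩
  obtain ⟨i, hi, hx⟩ := Set.mem_iUnion₂.1 (ht (Set.mem_univ x))
  have hnear : dist (SimpleFunc.nearestPt e (t.sup id) x) x ≤ dist (e i) x := by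
    have := SimpleFunc.edist_nearestPt_le e x (Finset.le_sup (f := id) hi)
    rwa [edist_dist, edist_dist, ENNReal.ofReal_le_ofReal_iff dist_nonneg] at this
  exact hnear.trans (Metric.mem_ball'.1 hx).le

theorem integral_simpleFunc_comp_eq_sum {X Y : Type*} [MeasurableSpace X] [MeasurableSpace Y]
    [MeasurableSingletonClass Y] (μ : Measure X) [IsFiniteMeasure μ] (s : SimpleFunc X Y)
    (φ : Y → ℝ) :
    ∫ x, φ (s x) ∂μ = ∑ y : s.range, μ.real (s ⁻¹' {y.1}) * φ y := by
  let π : X → s.range := fun x => ⟨s x, s.mem_range_self x⟩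
  have hπ : Measurable π := s.measurable.subtype_mk
  have hpre : ∀ y, π ⁻¹' {y} = s ⁻¹' {y.1} := fun y => by ext x; simp [π, Subtype.ext_iff]
  have hφ : Measurable fun y : s.range => φ y := .of_discrete
  calc ∫ x, φ (s x) ∂μ = ∫ y, φ y ∂(μ.map π) :=
        (integral_map hπ.aemeasurable hφ.aestronglyMeasurable).symm
    _ = ∑ y : s.range, μ.real (s ⁻¹' {y.1}) * φ y := by
        rw [integral_fintype .of_finite]
        simp only [map_measureReal_apply hπ (measurableSet_singleton _), hpre, smul_eq_mul]

theorem abs_integral_sub_integral_comp_le {X : Type*} [PseudoMetricSpace X] [MeasurableSpace X]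
    {μ : Measure X} [IsProbabilityMeasure μ] {K : NNReal} {φ : X → ℝ} (hφ : LipschitzWith K φ)
    {s : X → X} {ε : ℝ} (hs : ∀ x, dist (s x) x ≤ ε) (hint : Integrable φ μ)
    (hints : Integrable (fun x => φ (s x)) μ) :
    |∫ x, φ x ∂μ - ∫ x, φ (s x) ∂μ| ≤ K * ε := by
  have hbound : ∀ x, ‖φ x - φ (s x)‖ ≤ K * ε := fun x => by
    rw [← dist_eq_norm, dist_comm]
    exact (hφ.dist_le_mul _ _).trans (by gcongr; exact hs x)
  simpa [integral_sub hint hints] using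
    norm_integral_le_of_norm_le_const (μ := μ) (Eventually.of_forall hbound)

theorem integral_empMeasure {X : Type*} [MeasurableSpace X] [MeasurableSingletonClass X] {M : ℕ}
    (x : Fin M → X) (φ : X → ℝ) :
    ∫ y, φ y ∂(empMeasure x) = (M : ℝ)⁻¹ * ∑ i, φ (x i) := by
  rw [empMeasure, integral_smul_measure,
    integral_finsetSum_measure fun i _ => integrable_dirac (by simp)]
  simp [integral_dirac]

end Quantization

section KantorovichRubinstein

variable {X : Type*} [MetricSpace X] [MeasurableSpace X]

theorem dKR_self (μ : Measure X) : dKR μ μ = 0 := by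
  simp [dKR]

theorem dKR_le {μ ν : Measure X} {ε : ℝ}
    (h : ∀ φ : X → ℝ, LipschitzWith 1 φ → ∫ x, φ x ∂μ - ∫ x, φ x ∂ν ≤ ε) : dKR μ ν ≤ ε :=
  have : Nonempty {f : X → ℝ // LipschitzWith 1 f} := ⟨0, LipschitzWith.const' 0⟩
  ciSup_le fun φ => h φ.1 φ.2

theorem dKR_nonneg (μ ν : Measure X) : 0 ≤ dKR μ ν :=
  Real.iSup_nonneg' ⟨⟨0, LipschitzWith.const' 0⟩, by simp⟩

variable [CompactSpace X] [OpensMeasurableSpace X] (μ : Measure X) [IsProbabilityMeasure μ]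

theorem eventually_exists_dKR_empMeasure_le {ε : ℝ} (hε : 0 < ε) :
    ∀ᶠ M : ℕ in atTop, ∃ x : Fin (M + 1) → X, dKR μ (empMeasure x) ≤ ε := by
  have : Nonempty X := μ.nonempty_of_neZero
  obtain ⟨s, hs⟩ := exists_simpleFunc_dist_le (X := X) (half_pos hε)
  let p : s.range → ℝ := fun y => μ.real (s ⁻¹' {y.1})
  have hp : ∑ y, p y = 1 := by
    simpa using (integral_simpleFunc_comp_eq_sum μ s fun _ => 1).symm
  let D := Metric.diam (Set.univ : Set X)
  have hrate : ∀ᶠ M : ℕ in atTop,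
      2 * Fintype.card s.range * D / ((M + 1 : ℕ) : ℝ) ≤ ε / 2 :=
    ((tendsto_const_div_atTop_nhds_zero_nat _).comp (tendsto_add_atTop_nat 1)).eventually_le_const
      (half_pos hε)
  filter_upwards [hrate] with M hM
  obtain ⟨x, hx⟩ := exists_fin_tuple_forall_abs_sum_sub_average_le (p := p)
    (fun _ => measureReal_nonneg) hp M.succ_pos
  refine ⟨fun m => x m, dKR_le fun φ hφ => ?_⟩
  have hquantize : |∫ y, φ y ∂μ - ∫ y, φ (s y) ∂μ| ≤ ε / 2 := by
    simpa using abs_integral_sub_integral_comp_le hφ hs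
      (hφ.continuous.integrable_of_hasCompactSupport (.of_compactSpace φ))
      (SimpleFunc.integrable_of_isFiniteMeasure (s.map φ))
  have hround : |∫ y, φ (s y) ∂μ - ∫ y, φ y ∂(empMeasure fun m => (x m : X))| ≤ ε / 2 := by
    rw [integral_simpleFunc_comp_eq_sum, integral_empMeasure]
    refine (hx (fun y => φ y) D fun y z => ?_).trans hM
    calc |φ y - φ z| ≤ dist (y : X) z := by simpa [Real.dist_eq] using hφ.dist_le_mul y z
      _ ≤ D := Metric.dist_le_diam_of_mem isCompact_univ.isBounded trivial trivial
  linarith [le_of_abs_le hquantize, le_of_abs_le hround]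

theorem exists_tendsto_dKR_empMeasure :
    ∃ ξ : ∀ M : ℕ, Fin (M + 1) → X,
      Tendsto (fun M => dKR μ (empMeasure (ξ M))) atTop (𝓝 0) := by
  have : Nonempty X := μ.nonempty_of_neZero
  obtain ⟨ξ, hξ⟩ := exists_seq_forall_eventually
    (fun M x ε δ hεδ (h : dKR μ (empMeasure x) ≤ ε) => h.trans hεδ)
    fun ε hε => eventually_exists_dKR_empMeasure_le μ hε
  refine ⟨ξ, Metric.nhds_basis_closedBall.tendsto_right_iff.2 fun ε hε => ?_⟩
  filter_upwards [hξ ε hε] with M hM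
  simpa [abs_of_nonneg (dKR_nonneg _ _)] using hM

end KantorovichRubinstein

theorem norm_sub_sq_le_of_abs_inner_sub_inner_le {P H : Type*} [NormedAddCommGroup H]
    [InnerProductSpace ℝ H] {Φ : P → H} {d : P → P → ℝ} {L : ℝ} (hd : ∀ p, d p p = 0)
    (hΦ : ∀ p p' q q', |⟪Φ p, Φ p'⟫ - ⟪Φ q, Φ q'⟫| ≤ L * (d p q + d p' q')) (p q : P) :
    ‖Φ q - Φ p‖ ^ 2 ≤ 2 * L * d p q := by
  have hpq := hΦ p p q p
  have hqq := hΦ p q q q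
  rw [hd, add_zero] at hpq hqq
  calc ‖Φ q - Φ p‖ ^ 2 = (⟪Φ p, Φ p⟫ - ⟪Φ q, Φ p⟫) - (⟪Φ p, Φ q⟫ - ⟪Φ q, Φ q⟫) := by
        rw [← real_inner_self_eq_norm_sq, inner_sub_sub_self]
        ring
    _ ≤ 2 * L * d p q := by linarith [le_of_abs_le hpq, neg_le_of_abs_le hqq]

theorem exists_tendsto_feature_empProb {X : Type*} [MetricSpace X] [CompactSpace X]
    [MeasurableSpace X] [OpensMeasurableSpace X] {H : Type*} [NormedAddCommGroup H]
    [InnerProductSpace ℝ H] {Φ : ProbabilityMeasure X → H} {L : ℝ}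
    (hΦ : ∀ μ μ' ν ν' : ProbabilityMeasure X, |⟪Φ μ, Φ μ'⟫ - ⟪Φ ν, Φ ν'⟫| ≤
      L * (dKR (μ : Measure X) (ν : Measure X) + dKR (μ' : Measure X) (ν' : Measure X)))
    (μ : ProbabilityMeasure X) :
    ∃ ξ : ∀ M : ℕ, Fin (M + 1) → X,
      Tendsto (fun M => Φ (empProb (ξ M))) atTop (𝓝 (Φ μ)) := by
  obtain ⟨ξ, hξ⟩ := exists_tendsto_dKR_empMeasure (μ : Measure X)
  refine ⟨ξ, tendsto_iff_norm_sub_tendsto_zero.2 ?_⟩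
  have hle (M : ℕ) : ‖Φ (empProb (ξ M)) - Φ μ‖ ^ 2 ≤
      2 * L * dKR (μ : Measure X) (empMeasure (ξ M)) :=
    norm_sub_sq_le_of_abs_inner_sub_inner_le
      (d := fun μ ν : ProbabilityMeasure X => dKR (μ : Measure X) (ν : Measure X))
      (fun _ => dKR_self _) hΦ μ (empProb (ξ M))
  have hsq : Tendsto (fun M => ‖Φ (empProb (ξ M)) - Φ μ‖ ^ 2) atTop (𝓝 0) :=
    squeeze_zero (fun M => sq_nonneg _) hle
      (by simpa only [mul_zero] using hξ.const_mul (2 * L))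
  simpa only [Real.sqrt_sq (norm_nonneg _), Real.sqrt_zero] using hsq.sqrt

theorem mean_field_recovery_sequence_general {P : Type*} {Ω : ℕ → Type*} (emp : ∀ M, Ω M → P)
    {HM : ℕ → Type*} [∀ M, NormedAddCommGroup (HM M)] [∀ M, InnerProductSpace ℝ (HM M)]
    (ΦM : ∀ M, Ω M → HM M)
    {Hk : Type*} [NormedAddCommGroup Hk] [InnerProductSpace ℝ Hk] (Φ : P → Hk)
    (hdense : Dense (Submodule.span ℝ (Set.range Φ) : Set Hk))
    {C : ℝ} (hbd : ∀ M x, ‖Φ (emp M x)‖ ≤ C)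
    (happrox : ∀ p, ∃ ξ : ∀ M, Ω M, Tendsto (fun M => Φ (emp M (ξ M))) atTop (𝓝 (Φ p)))
    (hMF : UniformlyNull fun M (x : Ω M × Ω M) =>
      ⟪ΦM M x.1, ΦM M x.2⟫ - ⟪Φ (emp M x.1), Φ (emp M x.2)⟫)
    (g : Hk) :
    ∃ fM : ∀ M, HM M, UniformlyNull (fun M x => ⟪fM M, ΦM M x⟫ - ⟪g, Φ (emp M x)⟫) ∧
      Tendsto (fun M => ‖fM M‖) atTop (𝓝 ‖g‖) := by
  choose ξ hξ using happrox
  refine exists_isRecoverySequence_of_mem_closure (ψ := fun M x => Φ (emp M x)) hbd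
    (closure_mono (fun g' hg' => ?_) (hdense g))
  obtain ⟨c, rfl⟩ := Finsupp.mem_span_range_iff_exists_finsupp.1 hg'
  exact ⟨_, isRecoverySequence_sum_smul c.support c ξ hbd hMF hξ⟩

/-- Recovery sequences (Γ-limsup): for every `f ∈ H_k` (represented by `g`)
there is a sequence `f_M ∈ H_{k_M}` converging to `f` in mean field with
`limsup ‖f_M‖_{k_M} ≤ ‖f‖ₖ`. -/
theorem mean_field_recovery_sequence
    {X : Type*} [MetricSpace X] [CompactSpace X] [Nonempty X]
    [MeasurableSpace X] [BorelSpace X]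
    {HM : ℕ → Type*} [∀ M, NormedAddCommGroup (HM M)] [∀ M, InnerProductSpace ℝ (HM M)]
    [∀ M, CompleteSpace (HM M)]
    (ΦM : ∀ M : ℕ, (Fin (M + 1) → X) → HM M)
    (kM : ∀ M : ℕ, (Fin (M + 1) → X) → (Fin (M + 1) → X) → ℝ)
    (hkM : ∀ M x x', kM M x x' = ⟪ΦM M x, ΦM M x'⟫)
    {Hk : Type*} [NormedAddCommGroup Hk] [InnerProductSpace ℝ Hk] [CompleteSpace Hk]
    (Φ : ProbabilityMeasure X → Hk)
    (k : ProbabilityMeasure X → ProbabilityMeasure X → ℝ)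
    (hkk : ∀ μ ν, k μ ν = ⟪Φ μ, Φ ν⟫)
    (hdense : Dense (Submodule.span ℝ (Set.range Φ) : Set Hk))
    (C_k L_k : ℝ)
    (hbdM : ∀ M x x', |kM M x x'| ≤ C_k)
    (hbdk : ∀ μ ν, |k μ ν| ≤ C_k)
    (hLipM : ∀ M (x₁ x₁' x₂ x₂' : Fin (M + 1) → X),
      |kM M x₁ x₁' - kM M x₂ x₂'| ≤
        L_k * (dKR (empMeasure x₁) (empMeasure x₂) + dKR (empMeasure x₁') (empMeasure x₂')))
    (hLipk : ∀ μ₁ μ₁' μ₂ μ₂' : ProbabilityMeasure X,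
      |k μ₁ μ₁' - k μ₂ μ₂'| ≤
        L_k * (dKR (μ₁ : Measure X) (μ₂ : Measure X) + dKR (μ₁' : Measure X) (μ₂' : Measure X)))
    (hMF : ∀ ε : ℝ, 0 < ε → ∃ M₀ : ℕ, ∀ M ≥ M₀, ∀ x x' : Fin (M + 1) → X,
      |kM M x x' - k (empProb x) (empProb x')| ≤ ε)
    (g : Hk) :
    ∃ fM : ∀ M, HM M,
      (∀ ε : ℝ, 0 < ε → ∃ M₀ : ℕ, ∀ M ≥ M₀, ∀ x : Fin (M + 1) → X,
        |⟪fM M, ΦM M x⟫ - ⟪g, Φ (empProb x)⟫| ≤ ε) ∧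
      Filter.limsup (fun M => ‖fM M‖) Filter.atTop ≤ ‖g‖ := by
  simp only [hkM, hkk] at hbdk hLipk hMF
  have hΦ : ∀ μ, ‖Φ μ‖ ≤ √C_k := fun μ => by
    rw [norm_eq_sqrt_real_inner]
    exact Real.sqrt_le_sqrt (le_of_abs_le (hbdk μ μ))
  obtain ⟨fM, hunif, hnorm⟩ := mean_field_recovery_sequence_general (fun _ x => empProb x) ΦM Φ
    hdense (fun _ x => hΦ (empProb x)) (exists_tendsto_feature_empProb hLipk)
    (fun ε hε => eventually_atTop.2 <| (hMF ε hε).imp fun _ h M hM x => h M hM x.1 x.2) g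
  exact ⟨fM, fun ε hε => eventually_atTop.1 (hunif ε hε), hnorm.limsup_eq.le⟩
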